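/- arXiv:math-ph/0306051 — 3 statements merged into one kernel-verified Lean document; each statement's English description precedes it below -/
import Mathlib

section
/- Let d ≥ 1, 0 < μ < 2, ε₁ > 0, 0 < ε₂ < 2 − μ, and R > 0. Let V₁ be real-valued and differentiable on {x ∈ ℝ^d : |x| > R} with V₁(x) ≤ −ε₁⟨x⟩^{−μ} and −x·∇V₁(x) ≥ (2−ε₂)V₁(x) for all |x| > R. Let χ₊ ∈ C^∞(ℝ) be nondecreasing with χ₊ = 0 on (−∞,1] and χ₊ = 1 on [2,∞), and set χ₋ = 1 − χ₊. For n > R define Ṽ₁(x) = χ₊(|x|/n)V₁(x) − ε₁⟨x⟩^{−μ}χ₋(|x|/n). Then Ṽ₁ is differentiable on all of ℝ^d and satisfies, for every x ∈ ℝ^d: (a) Ṽ₁(x) ≤ −ε₁⟨x⟩^{−μ}, and (b) −x·∇Ṽ₁(x) ≥ (2−ε₂)Ṽ₁(x). -/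
open Real

noncomputable section

/-- The Japanese bracket `⟨x⟩ = (1+|x|²)^{1/2}`. -/
def jap {d : ℕ} (x : EuclideanSpace ℝ (Fin d)) : ℝ := Real.sqrt (1 + ‖x‖ ^ 2)

/-- The modified potential `Ṽ₁ = χ₊(|x|/n) V₁ - ε₁⟨x⟩^{-μ} χ₋(|x|/n)`, `χ₋ = 1 - χ₊`. -/
def tildeV {d : ℕ} (μ ε₁ n : ℝ) (χp : ℝ → ℝ) (V₁ : EuclideanSpace ℝ (Fin d) → ℝ)
    (x : EuclideanSpace ℝ (Fin d)) : ℝ :=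
  χp (‖x‖ / n) * V₁ x - ε₁ * jap x ^ (-μ) * (1 - χp (‖x‖ / n))

/-!
The virial inequality `-x·∇V ≥ c V` is preserved under `φ V + (1 - φ) W` when `V ≤ W` and
`0 ≤ φ ≤ 1` is nondecreasing along rays: differentiating gives a convex combination of the two
virial inequalities plus the extra term `(x·∇φ) (W - V) ≥ 0`. Here `W = -ε₁⟨x⟩^{-μ}`, which
satisfies the inequality on the whole space because `μ |x|² ≤ c (1 + |x|²)`.
-/

section Virial

variable {E : Type*} [NormedAddCommGroup E] [NormedSpace ℝ E] {c : ℝ} {x : E}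

/-- The virial inequality `-x·∇V(x) ≥ c V(x)` at the point `x`. Differentiability at `x` is part of
the notion, since `fderiv` is `0` where `V` is not differentiable. -/
structure VirialBoundAt (c : ℝ) (V : E → ℝ) (x : E) : Prop where
  differentiableAt : DifferentiableAt ℝ V x
  mul_le_neg_fderiv : c * V x ≤ -fderiv ℝ V x x

namespace VirialBoundAt

variable {φ V W : E → ℝ}

lemma congr_of_eventuallyEq (hV : VirialBoundAt c V x) (h : W =ᶠ[nhds x] V) :
    VirialBoundAt c W x where
  differentiableAt := hV.differentiableAt.congr_of_eventuallyEq h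
  mul_le_neg_fderiv := by
    rw [h.fderiv_eq, h.eq_of_nhds]
    exact hV.mul_le_neg_fderiv

lemma convexCombination (hV : VirialBoundAt c V x) (hW : VirialBoundAt c W x)
    (hVW : V x ≤ W x) (hφ : DifferentiableAt ℝ φ x) (hφ_nonneg : 0 ≤ φ x) (hφ_le_one : φ x ≤ 1)
    (hφ_radial : 0 ≤ fderiv ℝ φ x x) :
    VirialBoundAt c (fun y ↦ φ y * V y + (1 - φ y) * W y) x := by
  have hderiv := (hφ.hasFDerivAt.mul hV.differentiableAt.hasFDerivAt).add
    ((hφ.hasFDerivAt.const_sub 1).mul hW.differentiableAt.hasFDerivAt)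
  refine ⟨hderiv.differentiableAt, ?_⟩
  have hfderiv : fderiv ℝ (fun y ↦ φ y * V y + (1 - φ y) * W y) x x =
      φ x * fderiv ℝ V x x + (1 - φ x) * fderiv ℝ W x x - fderiv ℝ φ x x * (W x - V x) := by
    refine (congrArg (· x) hderiv.fderiv).trans ?_
    simp only [add_apply, smul_apply, neg_apply, smul_eq_mul]
    ring
  calc c * (φ x * V x + (1 - φ x) * W x)
      = φ x * (c * V x) + (1 - φ x) * (c * W x) := by ring
    _ ≤ φ x * -fderiv ℝ V x x + (1 - φ x) * -fderiv ℝ W x x :=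
      add_le_add (mul_le_mul_of_nonneg_left hV.mul_le_neg_fderiv hφ_nonneg)
        (mul_le_mul_of_nonneg_left hW.mul_le_neg_fderiv (sub_nonneg.2 hφ_le_one))
    _ ≤ φ x * -fderiv ℝ V x x + (1 - φ x) * -fderiv ℝ W x x + fderiv ℝ φ x x * (W x - V x) :=
      le_add_of_nonneg_right (mul_nonneg hφ_radial (sub_nonneg.2 hVW))
    _ = -fderiv ℝ (fun y ↦ φ y * V y + (1 - φ y) * W y) x x := by rw [hfderiv]; ring

end VirialBoundAt

end Virial

section RadialCutoff

variable {E : Type*} [NormedAddCommGroup E] {χ : ℝ → ℝ} {n : ℝ} {V W : E → ℝ} {x : E}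

/-- The potential equal to `W` where `χ(|x|/n) = 0` and to `V` where `χ(|x|/n) = 1`, interpolating
linearly between the two elsewhere. -/
def radialGlue (χ : ℝ → ℝ) (n : ℝ) (V W : E → ℝ) (x : E) : ℝ :=
  χ (‖x‖ / n) * V x + (1 - χ (‖x‖ / n)) * W x

lemma radialGlue_eq_of_norm_le (hn : 0 < n) (hχ_zero : ∀ t ≤ 1, χ t = 0) (hx : ‖x‖ ≤ n) :
    radialGlue χ n V W x = W x := by
  simp [radialGlue, hχ_zero _ ((div_le_one hn).2 hx)]

lemma cutoff_nonneg (hχ_mono : Monotone χ) (hχ_zero : ∀ t ≤ 1, χ t = 0) (t : ℝ) : 0 ≤ χ t := by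
  rw [← hχ_zero (min t 1) (min_le_right t 1)]
  exact hχ_mono (min_le_left t 1)

lemma radialGlue_le (hn : 0 < n) (hχ_mono : Monotone χ) (hχ_zero : ∀ t ≤ 1, χ t = 0)
    (hVW : n ≤ ‖x‖ → V x ≤ W x) : radialGlue χ n V W x ≤ W x := by
  rcases le_total ‖x‖ n with hx | hx
  · exact (radialGlue_eq_of_norm_le hn hχ_zero hx).le
  · calc radialGlue χ n V W x = W x - χ (‖x‖ / n) * (W x - V x) := by rw [radialGlue]; ring
      _ ≤ W x := sub_le_self _
        (mul_nonneg (cutoff_nonneg hχ_mono hχ_zero _) (sub_nonneg.2 (hVW hx)))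

variable [NormedSpace ℝ E]

lemma hasFDerivAt_comp_norm_div (hχ : DifferentiableAt ℝ χ (‖x‖ / n))
    (hnorm : DifferentiableAt ℝ (‖·‖) x) :
    HasFDerivAt (fun y : E ↦ χ (‖y‖ / n))
      (deriv χ (‖x‖ / n) • n⁻¹ • fderiv ℝ (‖·‖) x) x := by
  simp only [div_eq_mul_inv] at hχ ⊢
  exact hχ.hasDerivAt.comp_hasFDerivAt x (hnorm.hasFDerivAt.mul_const n⁻¹)

lemma fderiv_comp_norm_div_self_nonneg (hn : 0 ≤ n) (hχ_mono : Monotone χ)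
    (hχ : DifferentiableAt ℝ χ (‖x‖ / n)) (hnorm : DifferentiableAt ℝ (‖·‖) x) :
    0 ≤ fderiv ℝ (fun y : E ↦ χ (‖y‖ / n)) x x := by
  have hfderiv : fderiv ℝ (fun y : E ↦ χ (‖y‖ / n)) x x = deriv χ (‖x‖ / n) * (n⁻¹ * ‖x‖) := by
    rw [(hasFDerivAt_comp_norm_div hχ hnorm).fderiv]
    simp only [smul_apply, smul_eq_mul, hnorm.fderiv_norm_self]
  rw [hfderiv]
  have hχ_deriv : 0 ≤ deriv χ (‖x‖ / n) := hχ_mono.deriv_nonneg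
  positivity

lemma VirialBoundAt.radialGlue {c : ℝ} (hn : 0 < n) (hχ : Differentiable ℝ χ)
    (hχ_mono : Monotone χ) (hχ_zero : ∀ t ≤ 1, χ t = 0) (hχ_le_one : ∀ t, χ t ≤ 1)
    (hnorm : x ≠ 0 → DifferentiableAt ℝ (‖·‖) x) (hW : VirialBoundAt c W x)
    (hV : n ≤ ‖x‖ → VirialBoundAt c V x) (hVW : n ≤ ‖x‖ → V x ≤ W x) :
    VirialBoundAt c (radialGlue χ n V W) x := by
  rcases lt_or_ge ‖x‖ n with hx | hx
  · refine hW.congr_of_eventuallyEq ?_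
    filter_upwards [continuous_norm.continuousAt.eventually_lt_const hx] with y hy
    exact radialGlue_eq_of_norm_le hn hχ_zero hy.le
  · have hnorm_x := hnorm (norm_pos_iff.1 (hn.trans_le hx))
    exact (hV hx).convexCombination hW (hVW hx)
      (hasFDerivAt_comp_norm_div (hχ _) hnorm_x).differentiableAt
      (cutoff_nonneg hχ_mono hχ_zero _) (hχ_le_one _)
      (fderiv_comp_norm_div_self_nonneg hn.le hχ_mono (hχ _) hnorm_x)

end RadialCutoff

section JapaneseBracket

variable {E : Type*} [NormedAddCommGroup E] [InnerProductSpace ℝ E]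

lemma hasFDerivAt_sqrt_one_add_norm_sq_rpow (p : ℝ) (x : E) :
    HasFDerivAt (fun y : E ↦ √(1 + ‖y‖ ^ 2) ^ p)
      ((p * √(1 + ‖x‖ ^ 2) ^ (p - 2)) • innerSL ℝ x) x := by
  have hpos : 0 < 1 + ‖x‖ ^ 2 := by positivity
  have hsqrt_pos : 0 < √(1 + ‖x‖ ^ 2) := sqrt_pos.2 hpos
  have hsqrt := ((hasStrictFDerivAt_norm_sq x).hasFDerivAt.const_add 1).sqrt hpos.ne'
  convert hsqrt.rpow_const (p := p) (Or.inl hsqrt_pos.ne') using 1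
  rw [smul_smul, ← Nat.cast_smul_eq_nsmul ℝ, smul_smul, show p - 2 = p - 1 - 1 by ring,
    rpow_sub_one hsqrt_pos.ne' (p - 1)]
  congr 1
  push_cast
  field_simp

lemma virialBoundAt_neg_mul_sqrt_one_add_norm_sq_rpow_neg {c μ ε : ℝ} (hc : 0 ≤ c) (hμ : μ ≤ c)
    (hε : 0 ≤ ε) (x : E) : VirialBoundAt c (fun y : E ↦ -ε * √(1 + ‖y‖ ^ 2) ^ (-μ)) x := by
  have hderiv := (hasFDerivAt_sqrt_one_add_norm_sq_rpow (-μ) x).const_mul (-ε)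
  refine ⟨hderiv.differentiableAt, ?_⟩
  have hpos : 0 < √(1 + ‖x‖ ^ 2) := by positivity
  have hfderiv : fderiv ℝ (fun y : E ↦ -ε * √(1 + ‖y‖ ^ 2) ^ (-μ)) x x =
      ε * √(1 + ‖x‖ ^ 2) ^ (-μ - 2) * (μ * ‖x‖ ^ 2) := by
    rw [hderiv.fderiv]
    simp only [smul_apply, innerSL_apply_apply, real_inner_self_eq_norm_sq, smul_eq_mul]
    ring
  have hsplit : √(1 + ‖x‖ ^ 2) ^ (-μ) = √(1 + ‖x‖ ^ 2) ^ (-μ - 2) * (1 + ‖x‖ ^ 2) := by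
    rw [rpow_sub hpos, rpow_two, sq_sqrt (by positivity)]
    field_simp
  have hμc : μ * ‖x‖ ^ 2 ≤ c * (1 + ‖x‖ ^ 2) := by
    nlinarith [mul_le_mul_of_nonneg_right hμ (sq_nonneg ‖x‖)]
  rw [hfderiv, hsplit]
  calc c * (-ε * (√(1 + ‖x‖ ^ 2) ^ (-μ - 2) * (1 + ‖x‖ ^ 2)))
      = -(ε * √(1 + ‖x‖ ^ 2) ^ (-μ - 2) * (c * (1 + ‖x‖ ^ 2))) := by ring
    _ ≤ -(ε * √(1 + ‖x‖ ^ 2) ^ (-μ - 2) * (μ * ‖x‖ ^ 2)) := by gcongr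

end JapaneseBracket

theorem stmt_4_general {E : Type*} [NormedAddCommGroup E] [InnerProductSpace ℝ E]
    {c μ ε n : ℝ} (hc : 0 ≤ c) (hμ : μ ≤ c) (hε : 0 ≤ ε) (hn : 0 < n) {V : E → ℝ}
    (hV_diff : ∀ x, n ≤ ‖x‖ → DifferentiableAt ℝ V x)
    (hV_le : ∀ x, n ≤ ‖x‖ → V x ≤ -ε * √(1 + ‖x‖ ^ 2) ^ (-μ))
    (hV_virial : ∀ x, n ≤ ‖x‖ → -(fderiv ℝ V x x) ≥ c * V x)
    {χ : ℝ → ℝ} (hχ : Differentiable ℝ χ) (hχ_mono : Monotone χ)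
    (hχ_zero : ∀ t ≤ 1, χ t = 0) (hχ_le_one : ∀ t, χ t ≤ 1) :
    let Vmod : E → ℝ := fun x ↦
      χ (‖x‖ / n) * V x - ε * √(1 + ‖x‖ ^ 2) ^ (-μ) * (1 - χ (‖x‖ / n))
    Differentiable ℝ Vmod ∧
      ∀ x, Vmod x ≤ -ε * √(1 + ‖x‖ ^ 2) ^ (-μ) ∧ -(fderiv ℝ Vmod x x) ≥ c * Vmod x := by
  intro Vmod
  have hVmod : Vmod = radialGlue χ n V fun y ↦ -ε * √(1 + ‖y‖ ^ 2) ^ (-μ) := by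
    funext x
    simp only [Vmod, radialGlue]
    ring
  have hvirial (x : E) : VirialBoundAt c Vmod x := hVmod ▸
    .radialGlue hn hχ hχ_mono hχ_zero hχ_le_one (fun hx ↦ differentiableAt_id.norm ℝ hx)
      (virialBoundAt_neg_mul_sqrt_one_add_norm_sq_rpow_neg hc hμ hε x)
      (fun hx ↦ ⟨hV_diff x hx, hV_virial x hx⟩) (hV_le x)
  refine ⟨fun x ↦ (hvirial x).differentiableAt, fun x ↦ ⟨?_, (hvirial x).mul_le_neg_fderiv⟩⟩
  rw [hVmod]
  exact radialGlue_le hn hχ_mono hχ_zero (hV_le x)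

/-- The negativity and positive-virial conditions imposed near infinity can be arranged
globally by a smooth cutoff modification inside a large ball. -/
theorem stmt_4 (d : ℕ) (hd : 1 ≤ d) (μ ε₁ ε₂ R : ℝ)
    (hμ0 : 0 < μ) (hμ2 : μ < 2) (hε₁ : 0 < ε₁) (hε₂0 : 0 < ε₂) (hε₂ : ε₂ < 2 - μ)
    (hR : 0 < R)
    (V₁ : EuclideanSpace ℝ (Fin d) → ℝ)
    (hV₁diff : ∀ x : EuclideanSpace ℝ (Fin d), R < ‖x‖ → DifferentiableAt ℝ V₁ x)
    (hV₁neg : ∀ x : EuclideanSpace ℝ (Fin d), R < ‖x‖ → V₁ x ≤ -ε₁ * jap x ^ (-μ))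
    (hvir : ∀ x : EuclideanSpace ℝ (Fin d), R < ‖x‖ →
      -(fderiv ℝ V₁ x x) ≥ (2 - ε₂) * V₁ x)
    (χp : ℝ → ℝ) (hχsmooth : ContDiff ℝ (⊤ : ℕ∞) χp) (hχmono : Monotone χp)
    (hχ0 : ∀ t : ℝ, t ≤ 1 → χp t = 0) (hχ1 : ∀ t : ℝ, 2 ≤ t → χp t = 1)
    (n : ℝ) (hn : R < n) :
    Differentiable ℝ (tildeV μ ε₁ n χp V₁) ∧
    ∀ x : EuclideanSpace ℝ (Fin d),
      (tildeV μ ε₁ n χp V₁ x ≤ -ε₁ * jap x ^ (-μ)) ∧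
      (-(fderiv ℝ (tildeV μ ε₁ n χp V₁) x x) ≥ (2 - ε₂) * tildeV μ ε₁ n χp V₁ x) :=
  stmt_4_general (by linarith) (by linarith) hε₁.le (hR.trans hn)
    (fun x hx ↦ hV₁diff x (hn.trans_le hx)) (fun x hx ↦ hV₁neg x (hn.trans_le hx))
    (fun x hx ↦ hvir x (hn.trans_le hx)) (hχsmooth.differentiable (by simp)) hχmono hχ0
    fun t ↦ hχ1 (max t 2) (le_max_right t 2) ▸ hχmono (le_max_left t 2)
end
end

section
/- Let d ≥ 1, 0 < μ < 2, κ₀ > 0, and for E ∈ (0,1] define the metric g_{E,(x,ξ)}(v_x, v_ξ) = |v_x|²/⟨x⟩² + |v_ξ|²/f_E(x)² on ℝ^d × ℝ^d. Then there exists a constant C₁ > 0, independent of E ∈ (0,1], such that g_E is slowly varying uniformly in E: for all E ∈ (0,1], all (x,ξ), (y,η) ∈ ℝ^d × ℝ^d with g_{E,(x,ξ)}(y,η) ≤ 1/C₁, and all (v_x, v_ξ) ∈ ℝ^d × ℝ^d, one has g_{E,(x+y, ξ+η)}(v_x, v_ξ) ≤ C₁ · g_{E,(x,ξ)}(v_x,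 v_ξ). -/
open Real

noncomputable section

/-- The energy-dependent weight `f_E(x) = (κ₀^{-2}E + (1-μ/2)^{-1}⟨x⟩^{-μ})^{1/2}`. -/
def fE {d : ℕ} (μ κ₀ E : ℝ) (x : EuclideanSpace ℝ (Fin d)) : ℝ :=
  Real.sqrt ((κ₀ ^ 2)⁻¹ * E + (1 - μ/2)⁻¹ * jap x ^ (-μ))

/-- The Hörmander metric `g_{E,(x,ξ)}(v_x,v_ξ) = |v_x|²/⟨x⟩² + |v_ξ|²/f_E(x)²`
(it depends on the base point only through `x`). -/
def gMet {d : ℕ} (μ κ₀ E : ℝ) (x vx vξ : EuclideanSpace ℝ (Fin d)) : ℝ :=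
  ‖vx‖ ^ 2 / jap x ^ 2 + ‖vξ‖ ^ 2 / fE μ κ₀ E x ^ 2

/-!
The bracket `⟨·⟩` is 1-Lipschitz, so a displacement `y` with `|y| ≤ ⟨x⟩ / 2` changes it by a factor
of at most 2. Powers of the bracket then change by bounded factors as well, and adding a nonnegative
constant to such a power, as in `f_E²`, does not worsen the factor. This is why the estimate does
not see `E`.
-/

lemma sqrt_one_add_norm_add_sq_le {V : Type*} [SeminormedAddGroup V] (x y : V) :
    √(1 + ‖x + y‖ ^ 2) ≤ √(1 + ‖x‖ ^ 2) + ‖y‖ := by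
  have norm_le : ‖x‖ ≤ √(1 + ‖x‖ ^ 2) := Real.le_sqrt_of_sq_le (by linarith)
  have sq_bracket : √(1 + ‖x‖ ^ 2) ^ 2 = 1 + ‖x‖ ^ 2 := Real.sq_sqrt (by positivity)
  refine Real.sqrt_le_iff.2 ⟨by positivity, ?_⟩
  calc 1 + ‖x + y‖ ^ 2
      ≤ 1 + (‖x‖ + ‖y‖) ^ 2 := by gcongr; exact norm_add_le x y
    _ = (1 + ‖x‖ ^ 2) + 2 * ‖x‖ * ‖y‖ + ‖y‖ ^ 2 := by ring
    _ ≤ √(1 + ‖x‖ ^ 2) ^ 2 + 2 * √(1 + ‖x‖ ^ 2) * ‖y‖ + ‖y‖ ^ 2 := by rw [sq_bracket]; gcongr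
    _ = (√(1 + ‖x‖ ^ 2) + ‖y‖) ^ 2 := by ring

lemma rpow_le_rpow_abs_mul_rpow {s t c : ℝ} (hs : 0 < s) (ht : 0 < t)
    (hst : s ≤ c * t) (hts : t ≤ c * s) (p : ℝ) : s ^ p ≤ c ^ |p| * t ^ p := by
  have hc : 0 < c := pos_of_mul_pos_left (hs.trans_le hst) ht.le
  rcases le_total 0 p with hp | hp
  · calc s ^ p ≤ (c * t) ^ p := Real.rpow_le_rpow hs.le hst hp
      _ = c ^ |p| * t ^ p := by rw [Real.mul_rpow hc.le ht.le, abs_of_nonneg hp]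
  · calc s ^ p = c ^ |p| * (c * s) ^ p := by
          rw [Real.mul_rpow hc.le hs.le, ← mul_assoc, ← Real.rpow_add hc, abs_of_nonpos hp,
            neg_add_cancel, Real.rpow_zero, one_mul]
      _ ≤ c ^ |p| * t ^ p := by
          gcongr ?_ * ?_
          exact Real.rpow_le_rpow_of_nonpos ht hts hp

lemma div_le_mul_div_of_le_mul {a b c C : ℝ} (ha : 0 ≤ a) (hb : 0 < b) (hc : 0 < c)
    (hbc : b ≤ C * c) : a / c ≤ C * (a / b) := by
  rw [← mul_div_assoc, div_le_div_iff₀ hc hb]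
  calc a * b ≤ a * (C * c) := by gcongr
    _ = C * a * c := by ring

section Weights

variable {d : ℕ} {μ κ₀ E : ℝ}

lemma jap_pos (x : EuclideanSpace ℝ (Fin d)) : 0 < jap x :=
  Real.sqrt_pos.2 (by positivity)

lemma jap_add_le (x y : EuclideanSpace ℝ (Fin d)) : jap (x + y) ≤ jap x + ‖y‖ :=
  sqrt_one_add_norm_add_sq_le x y

lemma jap_add_le_two_mul {x y : EuclideanSpace ℝ (Fin d)} (hy : ‖y‖ ≤ 1 / 2 * jap x) :
    jap (x + y) ≤ 2 * jap x := by
  linarith [jap_add_le x y, jap_pos x]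

lemma jap_le_two_mul_jap_add {x y : EuclideanSpace ℝ (Fin d)} (hy : ‖y‖ ≤ 1 / 2 * jap x) :
    jap x ≤ 2 * jap (x + y) := by
  have := jap_add_le (x + y) (-y)
  rw [add_neg_cancel_right, norm_neg] at this
  linarith

lemma fE_radicand_pos (hμ : μ < 2) (hE : 0 ≤ (κ₀ ^ 2)⁻¹ * E) (x : EuclideanSpace ℝ (Fin d)) :
    0 < (κ₀ ^ 2)⁻¹ * E + (1 - μ / 2)⁻¹ * jap x ^ (-μ) :=
  add_pos_of_nonneg_of_pos hE <|
    mul_pos (inv_pos.2 (by linarith)) (Real.rpow_pos_of_pos (jap_pos x) _)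

lemma fE_pos (hμ : μ < 2) (hE : 0 ≤ (κ₀ ^ 2)⁻¹ * E) (x : EuclideanSpace ℝ (Fin d)) :
    0 < fE μ κ₀ E x :=
  Real.sqrt_pos.2 (fE_radicand_pos hμ hE x)

lemma fE_sq (hμ : μ < 2) (hE : 0 ≤ (κ₀ ^ 2)⁻¹ * E) (x : EuclideanSpace ℝ (Fin d)) :
    fE μ κ₀ E x ^ 2 = (κ₀ ^ 2)⁻¹ * E + (1 - μ / 2)⁻¹ * jap x ^ (-μ) :=
  Real.sq_sqrt (fE_radicand_pos hμ hE x).le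

lemma fE_sq_le_mul_fE_sq (hμ : μ < 2) (hE : 0 ≤ (κ₀ ^ 2)⁻¹ * E) {C : ℝ} (hC : 1 ≤ C)
    {x z : EuclideanSpace ℝ (Fin d)} (hxz : jap x ^ (-μ) ≤ C * jap z ^ (-μ)) :
    fE μ κ₀ E x ^ 2 ≤ C * fE μ κ₀ E z ^ 2 := by
  have coeff_nonneg : 0 ≤ (1 - μ / 2)⁻¹ := inv_nonneg.2 (by linarith)
  rw [fE_sq hμ hE, fE_sq hμ hE]
  calc (κ₀ ^ 2)⁻¹ * E + (1 - μ / 2)⁻¹ * jap x ^ (-μ)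
      ≤ C * ((κ₀ ^ 2)⁻¹ * E) + (1 - μ / 2)⁻¹ * (C * jap z ^ (-μ)) :=
        add_le_add (le_mul_of_one_le_left hE hC) (mul_le_mul_of_nonneg_left hxz coeff_nonneg)
    _ = C * ((κ₀ ^ 2)⁻¹ * E + (1 - μ / 2)⁻¹ * jap z ^ (-μ)) := by ring

lemma norm_le_mul_jap_of_gMet_le {r : ℝ} (hr : 0 ≤ r) {x y η : EuclideanSpace ℝ (Fin d)}
    (h : gMet μ κ₀ E x y η ≤ r ^ 2) : ‖y‖ ≤ r * jap x := by
  have hx := jap_pos x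
  have position_part_le : ‖y‖ ^ 2 / jap x ^ 2 ≤ r ^ 2 :=
    (le_add_of_nonneg_right (by positivity)).trans h
  refine le_of_sq_le_sq ?_ (by positivity)
  rwa [mul_pow, ← div_le_iff₀ (by positivity)]

lemma gMet_le_mul_gMet (hμ : μ < 2) (hE : 0 ≤ (κ₀ ^ 2)⁻¹ * E) {C : ℝ}
    {x z : EuclideanSpace ℝ (Fin d)} (hjap : jap x ^ 2 ≤ C * jap z ^ 2)
    (hfE : fE μ κ₀ E x ^ 2 ≤ C * fE μ κ₀ E z ^ 2) (vx vξ : EuclideanSpace ℝ (Fin d)) :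
    gMet μ κ₀ E z vx vξ ≤ C * gMet μ κ₀ E x vx vξ := by
  unfold gMet
  rw [mul_add]
  exact add_le_add
    (div_le_mul_div_of_le_mul (sq_nonneg _) (pow_pos (jap_pos x) 2) (pow_pos (jap_pos z) 2) hjap)
    (div_le_mul_div_of_le_mul (sq_nonneg _) (pow_pos (fE_pos hμ hE x) 2)
      (pow_pos (fE_pos hμ hE z) 2) hfE)

lemma gMet_add_le_mul_gMet (hμ : μ < 2) (hE : 0 ≤ (κ₀ ^ 2)⁻¹ * E) {C : ℝ} (hC4 : 4 ≤ C)
    (hCμ : 2 ^ |μ| ≤ C) {x y : EuclideanSpace ℝ (Fin d)} (hy : ‖y‖ ≤ 1 / 2 * jap x)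
    (vx vξ : EuclideanSpace ℝ (Fin d)) :
    gMet μ κ₀ E (x + y) vx vξ ≤ C * gMet μ κ₀ E x vx vξ := by
  have hx := jap_pos x
  have hxy := jap_pos (x + y)
  have jap_le := jap_le_two_mul_jap_add hy
  have jap_sq_le : jap x ^ 2 ≤ C * jap (x + y) ^ 2 :=
    calc jap x ^ 2 ≤ (2 * jap (x + y)) ^ 2 := by gcongr
      _ = 4 * jap (x + y) ^ 2 := by ring
      _ ≤ C * jap (x + y) ^ 2 := by gcongr
  have jap_rpow_le : jap x ^ (-μ) ≤ C * jap (x + y) ^ (-μ) :=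
    calc jap x ^ (-μ) ≤ 2 ^ |-μ| * jap (x + y) ^ (-μ) :=
          rpow_le_rpow_abs_mul_rpow hx hxy jap_le (jap_add_le_two_mul hy) (-μ)
      _ ≤ C * jap (x + y) ^ (-μ) := by rw [abs_neg]; gcongr
  exact gMet_le_mul_gMet hμ hE jap_sq_le
    (fE_sq_le_mul_fE_sq hμ hE (by linarith) jap_rpow_le) vx vξ

end Weights

theorem stmt_12_general {μ : ℝ} (hμ : μ < 2) :
    ∃ C₁ > (0 : ℝ), ∀ (d : ℕ) (κ₀ : ℝ), κ₀ ≠ 0 → ∀ E ≥ 0,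
      ∀ x y η vx vξ : EuclideanSpace ℝ (Fin d),
        gMet μ κ₀ E x y η ≤ 1 / C₁ →
        gMet μ κ₀ E (x + y) vx vξ ≤ C₁ * gMet μ κ₀ E x vx vξ := by
  refine ⟨max 4 (2 ^ |μ|), by positivity, fun d κ₀ hκ₀ E hE x y η vx vξ h => ?_⟩
  have hκE : 0 ≤ (κ₀ ^ 2)⁻¹ * E := mul_nonneg (inv_pos.2 (sq_pos_of_ne_zero hκ₀)).le hE
  have hr : 1 / max 4 (2 ^ |μ|) ≤ (1 / 2 : ℝ) ^ 2 :=
    calc 1 / max 4 (2 ^ |μ|) ≤ (1 / 4 : ℝ) := by gcongr; exact le_max_left _ _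
      _ = (1 / 2) ^ 2 := by norm_num
  have hy : ‖y‖ ≤ 1 / 2 * jap x := norm_le_mul_jap_of_gMet_le (by norm_num) (h.trans hr)
  exact gMet_add_le_mul_gMet hμ hκE (le_max_left _ _) (le_max_right _ _) hy vx vξ

/-- The metric `g_E` is slowly varying uniformly in `E ∈ (0,1]` (Lemma 4.3 (i)). -/
theorem stmt_12 (d : ℕ) (hd : 1 ≤ d) (μ κ₀ : ℝ)
    (hμ0 : 0 < μ) (hμ2 : μ < 2) (hκ₀ : 0 < κ₀) :
    ∃ C₁ > (0:ℝ), ∀ E ∈ Set.Ioc (0:ℝ) 1,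
      ∀ x ξ y η vx vξ : EuclideanSpace ℝ (Fin d),
        gMet μ κ₀ E x y η ≤ 1 / C₁ →
        gMet μ κ₀ E (x + y) vx vξ ≤ C₁ * gMet μ κ₀ E x vx vξ := by
  obtain ⟨C₁, hC₁, slowly_varying⟩ := stmt_12_general hμ2
  exact ⟨C₁, hC₁, fun E hE x _ => slowly_varying d κ₀ hκ₀.ne' E hE.1.le x⟩
end
end

section
/- Let d ≥ 1, 0 < μ < 2, κ₀ > 0, and let N be any real number with N ≥ 2/(2−μ). Then there exists C̃ > 0 such that for all E ∈ (0,1] and all x, y ∈ ℝ^d: max( ⟨x⟩²/⟨y⟩² , ⟨y⟩²/⟨x⟩² ) ≤ C̃ ( 1 + f_E(x)² |x − y|² )^N. -/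
open Real

noncomputable section

/-!
Write `S = w ‖x - y‖²`, where `w = f_E(x)²`; all that matters about the weight is `⟨x⟩^(-μ) ≤ w`,
which gives `‖x - y‖² ≤ ⟨x⟩^μ S`. Peetre's inequality `⟨x⟩² ≤ 2 (⟨y⟩² + ‖x - y‖²)` and the same
with `x` and `y` exchanged then yield:

* `⟨y⟩² ≤ 2 (⟨x⟩² + ⟨x⟩^μ S) ≤ 2 (1 + S) ⟨x⟩²`, because `μ ≤ 2`;
* `⟨x⟩² ≤ 2 (⟨y⟩² + ⟨x⟩^μ S) ≤ 2 (1 + S) ⟨x⟩^μ ⟨y⟩^(2-μ)` when `⟨y⟩ ≤ ⟨x⟩`, and absorbing `⟨x⟩^μ`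
  into the left-hand side leaves `(⟨x⟩ / ⟨y⟩)^(2-μ) ≤ 2 (1 + S)`, whence the exponent `2 / (2 - μ)`.
-/

section RealInequalities

variable {a b S μ : ℝ}

theorem le_rpow_mul_of_rpow_neg_le {D w : ℝ} (ha : 0 < a) (hD : 0 ≤ D) (hw : a ^ (-μ) ≤ w) :
    D ≤ a ^ μ * (w * D) :=
  calc D = a ^ μ * (a ^ (-μ) * D) := by
        rw [← mul_assoc, ← rpow_add ha, add_neg_cancel, rpow_zero, one_mul]
    _ ≤ a ^ μ * (w * D) := by gcongr

theorem rpow_mul_rpow_two_sub (ha : 0 < a) : a ^ μ * a ^ (2 - μ) = a ^ 2 := by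
  rw [← rpow_add ha, add_sub_cancel, rpow_two]

theorem div_rpow_two_sub_le (hμ0 : 0 ≤ μ) (hμ2 : μ ≤ 2) (hS : 0 ≤ S) (hb : 1 ≤ b) (hba : b ≤ a)
    (h : a ^ 2 ≤ 2 * (b ^ 2 + a ^ μ * S)) : (a / b) ^ (2 - μ) ≤ 2 * (1 + S) := by
  have hb0 : 0 < b := by linarith
  have ha0 : 0 < a := by linarith
  have one_le_b_rpow : 1 ≤ b ^ (2 - μ) := one_le_rpow hb (by linarith)
  have b_sq_le : b ^ 2 ≤ a ^ μ * b ^ (2 - μ) := by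
    rw [← rpow_mul_rpow_two_sub (μ := μ) hb0]
    gcongr
  have weighted : a ^ μ * a ^ (2 - μ) ≤ a ^ μ * (2 * (1 + S) * b ^ (2 - μ)) :=
    calc a ^ μ * a ^ (2 - μ) = a ^ 2 := rpow_mul_rpow_two_sub ha0
      _ ≤ 2 * (b ^ 2 + a ^ μ * S) := h
      _ ≤ 2 * (a ^ μ * b ^ (2 - μ) + a ^ μ * (S * b ^ (2 - μ))) := by
        gcongr
        exact le_mul_of_one_le_right hS one_le_b_rpow
      _ = a ^ μ * (2 * (1 + S) * b ^ (2 - μ)) := by ring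
  rw [div_rpow ha0.le hb0.le, div_le_iff₀ (by positivity)]
  exact le_of_mul_le_mul_left weighted (by positivity)

theorem sq_div_sq_le_rpow {N : ℝ} (hμ0 : 0 ≤ μ) (hμ2 : μ < 2) (hN : 2 / (2 - μ) ≤ N) (hS : 0 ≤ S)
    (ha : 0 ≤ a) (hb : 1 ≤ b) (h : a ^ 2 ≤ 2 * (b ^ 2 + a ^ μ * S)) :
    a ^ 2 / b ^ 2 ≤ (2 * (1 + S)) ^ N := by
  have two_sub_pos : 0 < 2 - μ := by linarith
  have exponent_nonneg : 0 ≤ 2 / (2 - μ) := by positivity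
  have one_le_base : 1 ≤ 2 * (1 + S) := by linarith
  rw [← div_pow]
  rcases le_total a b with hab | hba
  · calc (a / b) ^ 2 ≤ 1 := pow_le_one₀ (by positivity) (div_le_one_of_le₀ hab (by positivity))
      _ ≤ (2 * (1 + S)) ^ N := one_le_rpow one_le_base (exponent_nonneg.trans hN)
  · calc (a / b) ^ 2 = ((a / b) ^ (2 - μ)) ^ (2 / (2 - μ)) := by
          rw [← rpow_mul (by positivity), mul_div_cancel₀ _ two_sub_pos.ne', rpow_two]
      _ ≤ (2 * (1 + S)) ^ (2 / (2 - μ)) := by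
          gcongr
          exact div_rpow_two_sub_le hμ0 hμ2.le hS hb hba h
      _ ≤ (2 * (1 + S)) ^ N := rpow_le_rpow_of_exponent_le one_le_base hN

theorem sq_div_sq_le_two_mul_one_add (hμ2 : μ ≤ 2) (hS : 0 ≤ S) (ha : 1 ≤ a)
    (h : b ^ 2 ≤ 2 * (a ^ 2 + a ^ μ * S)) : b ^ 2 / a ^ 2 ≤ 2 * (1 + S) := by
  have rpow_le_sq : a ^ μ ≤ a ^ 2 := by
    simpa only [rpow_two] using rpow_le_rpow_of_exponent_le ha hμ2
  rw [div_le_iff₀ (by positivity)]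
  calc b ^ 2 ≤ 2 * (a ^ 2 + a ^ μ * S) := h
    _ ≤ 2 * (a ^ 2 + a ^ 2 * S) := by gcongr
    _ = 2 * (1 + S) * a ^ 2 := by ring

end RealInequalities

section JapaneseBracket

variable {V : Type*} [SeminormedAddCommGroup V]

/-- The Japanese bracket `⟨x⟩ = (1 + ‖x‖²)^{1/2}` on a seminormed group; on
`EuclideanSpace ℝ (Fin d)` it is `jap` by definition. -/
def japaneseBracket (x : V) : ℝ := √(1 + ‖x‖ ^ 2)

theorem japaneseBracket_sq (x : V) : japaneseBracket x ^ 2 = 1 + ‖x‖ ^ 2 :=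
  sq_sqrt (by positivity)

theorem one_le_japaneseBracket (x : V) : 1 ≤ japaneseBracket x :=
  one_le_sqrt.2 (le_add_of_nonneg_right (sq_nonneg _))

theorem japaneseBracket_sq_le_two_mul (x y : V) :
    japaneseBracket x ^ 2 ≤ 2 * (japaneseBracket y ^ 2 + ‖x - y‖ ^ 2) := by
  have norm_sq_le : ‖x‖ ^ 2 ≤ 2 * (‖y‖ ^ 2 + ‖x - y‖ ^ 2) :=
    calc ‖x‖ ^ 2 ≤ (‖y‖ + ‖x - y‖) ^ 2 := by
          gcongr
          exact norm_le_norm_add_norm_sub' x y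
      _ ≤ 2 * (‖y‖ ^ 2 + ‖x - y‖ ^ 2) := add_sq_le
  rw [japaneseBracket_sq, japaneseBracket_sq]
  linarith

theorem stmt_16_general {μ N w : ℝ} (hμ0 : 0 ≤ μ) (hμ2 : μ < 2) (hN : 2 / (2 - μ) ≤ N) (x y : V)
    (hw : japaneseBracket x ^ (-μ) ≤ w) :
    max (japaneseBracket x ^ 2 / japaneseBracket y ^ 2)
        (japaneseBracket y ^ 2 / japaneseBracket x ^ 2) ≤
      2 ^ N * (1 + w * ‖x - y‖ ^ 2) ^ N := by
  have bracket_pos : 0 < japaneseBracket x := one_pos.trans_le (one_le_japaneseBracket x)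
  have w_nonneg : 0 ≤ w := (rpow_nonneg bracket_pos.le _).trans hw
  have one_le_N : 1 ≤ N := ((one_le_div (by linarith)).2 (by linarith)).trans hN
  have dist_sq_le : ‖x - y‖ ^ 2 ≤ japaneseBracket x ^ μ * (w * ‖x - y‖ ^ 2) :=
    le_rpow_mul_of_rpow_neg_le bracket_pos (sq_nonneg _) hw
  have x_sq_le := japaneseBracket_sq_le_two_mul x y
  have y_sq_le := japaneseBracket_sq_le_two_mul y x
  rw [norm_sub_rev] at y_sq_le
  have S_nonneg : 0 ≤ w * ‖x - y‖ ^ 2 := by positivity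
  rw [← mul_rpow zero_le_two (by linarith)]
  refine max_le ?_ ?_
  · exact sq_div_sq_le_rpow hμ0 hμ2 hN S_nonneg bracket_pos.le (one_le_japaneseBracket y)
      (by linarith)
  · exact (sq_div_sq_le_two_mul_one_add hμ2.le S_nonneg (one_le_japaneseBracket x)
      (by linarith)).trans (self_le_rpow_of_one_le (by linarith) one_le_N)

end JapaneseBracket

theorem jap_rpow_neg_le_fE_sq {d : ℕ} {μ E : ℝ} (κ₀ : ℝ) (hμ0 : 0 ≤ μ) (hμ2 : μ < 2) (hE : 0 ≤ E)
    (x : EuclideanSpace ℝ (Fin d)) : jap x ^ (-μ) ≤ fE μ κ₀ E x ^ 2 := by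
  have bracket_rpow_nonneg : 0 ≤ jap x ^ (-μ) := rpow_nonneg (sqrt_nonneg _) _
  have energy_nonneg : 0 ≤ (κ₀ ^ 2)⁻¹ * E := by positivity
  have one_le_coeff : 1 ≤ (1 - μ / 2)⁻¹ := (one_le_inv₀ (by linarith)).2 (by linarith)
  calc jap x ^ (-μ) ≤ (1 - μ / 2)⁻¹ * jap x ^ (-μ) :=
        le_mul_of_one_le_left bracket_rpow_nonneg one_le_coeff
    _ ≤ (κ₀ ^ 2)⁻¹ * E + (1 - μ / 2)⁻¹ * jap x ^ (-μ) := le_add_of_nonneg_left energy_nonneg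
    _ = fE μ κ₀ E x ^ 2 := (sq_sqrt (by positivity)).symm

/-- Formula (B.5): for any `N ≥ 2/(2-μ)` the weight ratio `⟨x⟩²/⟨y⟩²` is dominated by
`C̃(1 + f_E(x)²|x-y|²)^N`, uniformly in `E ∈ (0,1]`. -/
theorem stmt_16 (d : ℕ) (hd : 1 ≤ d) (μ κ₀ N : ℝ)
    (hμ0 : 0 < μ) (hμ2 : μ < 2) (hκ₀ : 0 < κ₀) (hN : 2 / (2 - μ) ≤ N) :
    ∃ Ct > (0:ℝ), ∀ E ∈ Set.Ioc (0:ℝ) 1, ∀ x y : EuclideanSpace ℝ (Fin d),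
      max (jap x ^ 2 / jap y ^ 2) (jap y ^ 2 / jap x ^ 2) ≤
        Ct * (1 + fE μ κ₀ E x ^ 2 * ‖x - y‖ ^ 2) ^ N := by
  exact ⟨2 ^ N, by positivity, fun E hE x y ↦
    stmt_16_general hμ0.le hμ2 hN x y (jap_rpow_neg_le_fE_sq κ₀ hμ0.le hμ2 hE.1.le x)⟩
end
end
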